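/- Let w₀ be any word over Ω and let σ be the folding morphism determined by w₀. Then for every natural number n, the n-fold iterate σⁿ applied to the one-letter word [B] equals the reverse-complement of σⁿ applied to the one-letter word [A]. -/

import Mathlib

/-!
The folding morphism commutes with reverse-complementation. Both sides of
`σ (revComp u) = revComp (σ u)` reverse concatenation, so it suffices to compare them on single
letters, where the equality is the definition of `σ` on `A`, the involutivity of `revComp` on `B`,
and `σ(±) = ±` on the remaining letters. Hence every iterate `σⁿ` commutes with `revComp`, and the
claim follows from `[B] = revComp [A]`.
-/

/-- The folding alphabet Ω = {A, B, +, -}. -/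
inductive OmegaLetter : Type
  | A | B | plus | minus
deriving DecidableEq

/-- The complement involution ~ on Ω: ~A = B, ~B = A, ~+ = -, ~- = +. -/
def OmegaLetter.compl : OmegaLetter → OmegaLetter
  | .A => .B
  | .B => .A
  | .plus => .minus
  | .minus => .plus

/-- The reverse-complement of a word: reverse of the letterwise complement. -/
def revComp (w : List OmegaLetter) : List OmegaLetter :=
  (w.map OmegaLetter.compl).reverse

/-- The folding morphism determined by `w0`: the monoid homomorphism on words with
σ(A) = w0, σ(B) = revComp w0, σ(+) = [+], σ(-) = [-]. -/
def foldMorph (w0 : List OmegaLetter) (u : List OmegaLetter) : List OmegaLetter :=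
  (u.map (fun x => match x with
    | OmegaLetter.A => w0
    | OmegaLetter.B => revComp w0
    | OmegaLetter.plus => [OmegaLetter.plus]
    | OmegaLetter.minus => [OmegaLetter.minus])).flatten


theorem revComp_append (u v : List OmegaLetter) :
    revComp (u ++ v) = revComp v ++ revComp u := by
  simp [revComp]

theorem revComp_revComp (u : List OmegaLetter) : revComp (revComp u) = u := by
  have h : OmegaLetter.compl ∘ OmegaLetter.compl = id := by
    funext x
    cases x <;> rfl
  simp [revComp, h]

theorem foldMorph_append (w0 u v : List OmegaLetter) :
    foldMorph w0 (u ++ v) = foldMorph w0 u ++ foldMorph w0 v := by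
  simp [foldMorph]

theorem foldMorph_revComp_singleton (w0 : List OmegaLetter) (x : OmegaLetter) :
    foldMorph w0 (revComp [x]) = revComp (foldMorph w0 [x]) := by
  cases x
  case B =>
    have h : foldMorph w0 [OmegaLetter.B] = revComp w0 := by simp [foldMorph]
    rw [h, revComp_revComp]
    simp [foldMorph, revComp, OmegaLetter.compl]
  all_goals simp [foldMorph, revComp, OmegaLetter.compl]

theorem foldMorph_commute_revComp (w0 : List OmegaLetter) :
    Function.Commute (foldMorph w0) revComp := by
  intro u
  induction u with
  | nil => rfl
  | cons x u ih =>
    rw [← List.singleton_append, revComp_append, foldMorph_append, foldMorph_append,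
      revComp_append, ih, foldMorph_revComp_singleton]

/-- For every n, σⁿ([B]) equals the reverse-complement of σⁿ([A]). -/
theorem iterate_foldMorph_B (w0 : List OmegaLetter) (n : ℕ) :
    (foldMorph w0)^[n] [OmegaLetter.B] = revComp ((foldMorph w0)^[n] [OmegaLetter.A]) := by
  exact (foldMorph_commute_revComp w0).iterate_left n [OmegaLetter.A]
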